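/- For any β ∈ (1,2], the β-Lyndon intervals are pairwise disjoint: if [t_L, t_R) and [t_L', t_R') are β-Lyndon intervals generated by distinct β-Lyndon words, then [t_L, t_R) ∩ [t_L', t_R') = ∅. -/

import Mathlib

open Set Filter MeasureTheory

/-- The β-transformation `x ↦ βx (mod 1)`. -/
noncomputable def Tbeta (β x : ℝ) : ℝ := Int.fract (β * x)

/-- The survivor set `K_β(t) = {x ∈ [0,1) : T_β^n x ≥ t for all n ≥ 0}`. -/
def Kset (β t : ℝ) : Set ℝ := {x | x ∈ Set.Ico (0 : ℝ) 1 ∧ ∀ n : ℕ, t ≤ (Tbeta β)^[n] x}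

/-- Strict lexicographic order on sequences of naturals. -/
def seqLt (x y : ℕ → ℕ) : Prop := ∃ n, (∀ i, i < n → x i = y i) ∧ x n < y n

/-- Lexicographic order on sequences of naturals. -/
def seqLe (x y : ℕ → ℕ) : Prop := x = y ∨ seqLt x y

/-- The `n`-th iterate of the left shift. -/
def shiftN (n : ℕ) (x : ℕ → ℕ) : ℕ → ℕ := fun i => x (i + n)

/-- The sequence `w 0^∞`. -/
def wordSeq (w : List ℕ) : ℕ → ℕ := fun i => w.getD i 0

/-- The periodic sequence `w^∞`. -/
def perSeq (w : List ℕ) : ℕ → ℕ := fun i => w.getD (i % w.length) 0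

/-- The sequence obtained by concatenating the word `w` with the sequence `x`. -/
def catSeq (w : List ℕ) (x : ℕ → ℕ) : ℕ → ℕ :=
  fun i => if i < w.length then w.getD i 0 else x (i - w.length)

/-- The greedy β-expansion of `t`: the digit `b_{i+1}` is `⌊β T_β^i t⌋`. -/
noncomputable def greedy (β t : ℝ) : ℕ → ℕ := fun i => (⌊β * (Tbeta β)^[i] t⌋).toNat

/-- `d` is the quasi-greedy β-expansion of `1`: the lexicographically largest
sequence in `{0,1}^ℕ` not ending in `0^∞` whose digits sum to `1` in base `β`. -/
def IsQuasiGreedy (β : ℝ) (d : ℕ → ℕ) : Prop :=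
  (∀ i, d i ≤ 1) ∧ (¬ ∃ N, ∀ n, N ≤ n → d n = 0) ∧
  (∑' i : ℕ, (d i : ℝ) / β ^ (i + 1) = 1) ∧
  ∀ e : ℕ → ℕ, (∀ i, e i ≤ 1) → (¬ ∃ N, ∀ n, N ≤ n → e n = 0) →
    (∑' i : ℕ, (e i : ℝ) / β ^ (i + 1) = 1) → seqLe e d

/-- `s = s_1…s_p` is a β-Lyndon word: `s_{i+1}…s_p ≻ s_1…s_{p-i}` for `1 ≤ i < p`
and `σ^n(s^∞) ≺ δ(β)` for all `n ≥ 0`. -/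
def IsBetaLyndon (β : ℝ) (s : List ℕ) : Prop :=
  s ≠ [] ∧ (∀ a ∈ s, a ≤ 1) ∧
  (∀ i, 1 ≤ i → i < s.length →
    seqLt (wordSeq (s.take (s.length - i))) (wordSeq (s.drop i))) ∧
  (∀ d : ℕ → ℕ, IsQuasiGreedy β d → ∀ n : ℕ, seqLt (shiftN n (perSeq s)) d)

/-- Left endpoint `t_L = Σ_{i=1}^p s_i β^{-i}` of the β-Lyndon interval generated by `s`. -/
noncomputable def lyndonLeft (β : ℝ) (s : List ℕ) : ℝ :=
  ∑ i ∈ Finset.range s.length, (s.getD i 0 : ℝ) / β ^ (i + 1)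

/-- Right endpoint `t_R = (β^p/(β^p - 1)) t_L` of the β-Lyndon interval generated by `s`. -/
noncomputable def lyndonRight (β : ℝ) (s : List ℕ) : ℝ :=
  β ^ s.length / (β ^ s.length - 1) * lyndonLeft β s

/-- The union of all β-Lyndon intervals `[t_L, t_R)`. -/
noncomputable def lyndonUnionIco (β : ℝ) : Set ℝ :=
  ⋃ s ∈ {s : List ℕ | IsBetaLyndon β s}, Set.Ico (lyndonLeft β s) (lyndonRight β s)

/-- The symbolic survivor set `K̃_β(t)` with upper bound sequence `d = δ(β)`. -/
def Ktilde (β t : ℝ) (d : ℕ → ℕ) : Set (ℕ → ℕ) :=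
  {x | (∀ i, x i ≤ 1) ∧ ∀ n : ℕ, seqLe (greedy β t) (shiftN n x) ∧ seqLe (shiftN n x) d}

/-- The set-valued bifurcation set `E_β`. -/
def Eset (β : ℝ) : Set ℝ :=
  {t | t ∈ Set.Ico (0 : ℝ) 1 ∧ ∀ t', t < t' → t' < 1 → Kset β t' ≠ Kset β t}

/-- The dimension bifurcation set `B_β`. -/
def Bset (β : ℝ) : Set ℝ :=
  {t | t ∈ Set.Ico (0 : ℝ) 1 ∧ ∀ t', t < t' → t' < 1 → dimH (Kset β t') ≠ dimH (Kset β t)}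

/-- `β` is a multinacci number: `β^{m+1} = β^m + ⋯ + β + 1` for some `m ≥ 1`. -/
def IsMultinacci (β : ℝ) : Prop :=
  ∃ m : ℕ, 1 ≤ m ∧ β ^ (m + 1) = ∑ i ∈ Finset.range (m + 1), β ^ i

/-!
For `β > 1` the endpoints of the interval generated by `s` are the values in base `β` of `s 0^∞` and
of `s^∞`. Two facts separate the intervals of distinct words `s`, `s'`.

* Combinatorial: `s^∞ ≺ s' 0^∞` or `s'^∞ ≺ s 0^∞`. If the words differ at a common position this is
  immediate. Otherwise `s' = s t`, say, and the Lyndon property of `s'` says that `x = s' 0^∞` is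
  smaller than its own shift by `|s|`; comparing `x` with `s^∞` block by block gives `s^∞ ≺ x`.
* Metric: if every shift of `x` is below a sequence of value at most `1`, such as `δ(β)`, then every
  shift of `x` has value at most `1`, and for such `x` the relation `x ≺ y` implies that the value
  of `x` is at most that of `y`.

Since `IsBetaLyndon` constrains the shifts of `s^∞` by every quasi-greedy expansion of `1` without
asserting that there is one, the existence of `δ(β)` is needed as well: it is produced by the
algorithm that takes at each step the largest digit leaving a positive remainder.
-/

section Sequences

variable {x y : ℕ → ℕ}

lemma shiftN_shiftN (m n : ℕ) (x : ℕ → ℕ) : shiftN m (shiftN n x) = shiftN (m + n) x :=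
  funext fun i ↦ congrArg x (add_assoc i m n)

lemma bddAbove_range_shiftN (hx : BddAbove (range x)) (n : ℕ) : BddAbove (range (shiftN n x)) :=
  hx.mono (range_comp_subset_range (· + n) x)

lemma shiftN_eq_zero_iff {n : ℕ} : shiftN n x = 0 ↔ ∀ i, n ≤ i → x i = 0 := by
  refine ⟨fun h i hi ↦ ?_, fun h ↦ funext fun i ↦ h (i + n) (Nat.le_add_left n i)⟩
  simpa [shiftN, Nat.sub_add_cancel hi] using congrFun h (i - n)

lemma seqLt_or_seqLt_of_ne (h : x ≠ y) : seqLt x y ∨ seqLt y x := by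
  have heq : ∀ i < PiNat.firstDiff x y, x i = y i := fun i ↦ PiNat.apply_eq_of_lt_firstDiff
  rcases (PiNat.apply_firstDiff_ne h).lt_or_gt with hlt | hgt
  · exact .inl ⟨_, heq, hlt⟩
  · exact .inr ⟨_, fun i hi ↦ (heq i hi).symm, hgt⟩

end Sequences

section Words

variable {s s' : List ℕ} {x : ℕ → ℕ}

lemma perSeq_apply_of_lt {i : ℕ} (hi : i < s.length) : perSeq s i = wordSeq s i := by
  rw [perSeq, wordSeq, Nat.mod_eq_of_lt hi]

lemma shiftN_length_perSeq (s : List ℕ) : shiftN s.length (perSeq s) = perSeq s := by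
  funext i
  simp only [shiftN, perSeq, Nat.add_mod_right]

lemma shiftN_wordSeq (n : ℕ) (s : List ℕ) : shiftN n (wordSeq s) = wordSeq (s.drop n) := by
  funext i
  simp only [shiftN, wordSeq, List.getD_eq_getElem?_getD, List.getElem?_drop, add_comm]

lemma wordSeq_le_sum (s : List ℕ) (i : ℕ) : wordSeq s i ≤ s.sum := by
  rcases lt_or_ge i s.length with hi | hi
  · rw [wordSeq, List.getD_eq_getElem _ _ hi]
    exact List.le_sum_of_mem (List.getElem_mem hi)
  · rw [wordSeq, List.getD_eq_default _ _ hi]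
    exact Nat.zero_le _

lemma bddAbove_range_wordSeq (s : List ℕ) : BddAbove (range (wordSeq s)) :=
  ⟨s.sum, forall_mem_range.2 (wordSeq_le_sum s)⟩

lemma bddAbove_range_perSeq (s : List ℕ) : BddAbove (range (perSeq s)) :=
  ⟨s.sum, forall_mem_range.2 fun i ↦ wordSeq_le_sum s (i % s.length)⟩

lemma perSeq_seqLt_of_apply_lt {n : ℕ} (hn : n < s.length) (heq : ∀ i < n, wordSeq s i = x i)
    (hlt : wordSeq s n < x n) : seqLt (perSeq s) x :=
  ⟨n, fun i hi ↦ (perSeq_apply_of_lt (hi.trans hn)).trans (heq i hi),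
    (perSeq_apply_of_lt hn).trans_lt hlt⟩

lemma perSeq_seqLt_of_seqLt_shiftN (hs : s ≠ []) (hpre : ∀ i < s.length, wordSeq s i = x i)
    (h : seqLt x (shiftN s.length x)) : seqLt (perSeq s) x := by
  have hpos : 0 < s.length := List.length_pos_iff.2 hs
  have hper (i : ℕ) : perSeq s (i + s.length) = perSeq s i := congrFun (shiftN_length_perSeq s) i
  obtain ⟨k, heq, hlt⟩ := h
  have hagree : ∀ i < k + s.length, perSeq s i = x i := by
    intro i
    induction i using Nat.strong_induction_on with
    | _ i ih =>
      intro hi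
      rcases lt_or_ge i s.length with his | his
      · rw [perSeq_apply_of_lt his, hpre i his]
      · obtain ⟨j, rfl⟩ := Nat.exists_eq_add_of_le' his
        rw [hper, ih j (by omega) (by omega)]
        exact heq j (by omega)
  refine ⟨k + s.length, hagree, ?_⟩
  rw [hper, hagree k (by omega)]
  exact hlt

/-- Lyndon words, compared after padding with zeros as in `IsBetaLyndon`: the nonempty words whose
proper suffixes are all strictly larger than the prefix of the same length. -/
def IsLyndonWord (s : List ℕ) : Prop :=
  s ≠ [] ∧ ∀ i, 1 ≤ i → i < s.length →
    seqLt (wordSeq (s.take (s.length - i))) (wordSeq (s.drop i))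

lemma IsBetaLyndon.isLyndonWord {β : ℝ} (hs : IsBetaLyndon β s) : IsLyndonWord s :=
  ⟨hs.1, hs.2.2.1⟩

namespace IsLyndonWord

lemma wordSeq_seqLt_shiftN (hs : IsLyndonWord s) {n : ℕ} (hn : 1 ≤ n) (hns : n < s.length) :
    seqLt (wordSeq s) (shiftN n (wordSeq s)) := by
  obtain ⟨k, heq, hlt⟩ := hs.2 n hn hns
  have hk : k < s.length - n := by
    by_contra! hge
    have hzero : wordSeq (s.drop n) k = 0 :=
      List.getD_eq_default _ _ (by rwa [List.length_drop])
    omega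
  have htake : ∀ i ≤ k, wordSeq (s.take (s.length - n)) i = wordSeq s i := fun i hi ↦ by
    simp only [wordSeq, List.getD_eq_getElem?_getD, List.getElem?_take_of_lt (hi.trans_lt hk)]
  rw [shiftN_wordSeq]
  exact ⟨k, fun i hi ↦ by rw [← htake i hi.le, heq i hi], by rwa [← htake k le_rfl]⟩

lemma perSeq_seqLt_wordSeq_or (hs : IsLyndonWord s) (hs' : IsLyndonWord s') (hne : s ≠ s') :
    seqLt (perSeq s) (wordSeq s') ∨ seqLt (perSeq s') (wordSeq s) := by
  wlog hlen : s.length ≤ s'.length generalizing s s'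
  · exact (this hs' hs hne.symm (le_of_not_ge hlen)).symm
  by_cases hpre : ∀ i < s.length, wordSeq s i = wordSeq s' i
  · have hlt : s.length < s'.length := hlen.lt_of_ne fun hlen_eq ↦
      hne <| List.ext_getElem hlen_eq fun i hi hi' ↦ by
        simpa only [wordSeq, List.getD_eq_getElem _ _ hi, List.getD_eq_getElem _ _ hi']
          using hpre i hi
    exact .inl <| perSeq_seqLt_of_seqLt_shiftN hs.1 hpre <|
      hs'.wordSeq_seqLt_shiftN (List.length_pos_iff.2 hs.1) hlt
  · push Not at hpre
    obtain ⟨i, his, hi⟩ := hpre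
    have hi_le {n : ℕ} (h : ∀ j < n, wordSeq s j = wordSeq s' j) : n < s.length :=
      (not_lt.1 fun hin ↦ hi (h i hin)).trans_lt his
    rcases seqLt_or_seqLt_of_ne (Function.ne_iff.2 ⟨i, hi⟩) with ⟨n, heq, hlt⟩ | ⟨n, heq, hlt⟩
    · exact .inl <| perSeq_seqLt_of_apply_lt (hi_le heq) heq hlt
    · have hn : n < s.length := hi_le fun j hj ↦ (heq j hj).symm
      exact .inr <| perSeq_seqLt_of_apply_lt (hn.trans_le hlen) heq hlt

end IsLyndonWord

end Words

/-- The real number `Σ_{i≥1} x_i β^{-i}` with digit sequence `x` in base `β`; since sequences are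
indexed from `0` here, the digit `x i` has weight `β^{-(i+1)}`. -/
noncomputable def expansionValue (β : ℝ) (x : ℕ → ℕ) : ℝ :=
  ∑' i : ℕ, (x i : ℝ) / β ^ (i + 1)

section ExpansionValue

variable {β : ℝ} {x y : ℕ → ℕ}

lemma summable_digit_div_pow (hβ : 1 < β) (hx : BddAbove (range x)) :
    Summable fun i ↦ (x i : ℝ) / β ^ (i + 1) := by
  obtain ⟨M, hM⟩ := hx
  have hgeom : Summable fun i : ℕ ↦ (M : ℝ) * β⁻¹ ^ (i + 1) :=
    ((summable_nat_add_iff 1).2 <| summable_geometric_of_lt_one (by positivity)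
      (inv_lt_one_of_one_lt₀ hβ)).mul_left _
  refine .of_nonneg_of_le (fun i ↦ by positivity) (fun i ↦ ?_) hgeom
  rw [inv_pow, ← div_eq_mul_inv]
  gcongr
  exact hM (mem_range_self i)

lemma expansionValue_nonneg (hβ : 0 ≤ β) (x : ℕ → ℕ) : 0 ≤ expansionValue β x :=
  tsum_nonneg fun i ↦ by positivity

lemma expansionValue_pos_iff (hβ : 1 < β) (hx : BddAbove (range x)) :
    0 < expansionValue β x ↔ x ≠ 0 := by
  refine ⟨fun hpos hzero ↦ by simp [expansionValue, hzero] at hpos, fun hne ↦ ?_⟩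
  obtain ⟨i, hi⟩ := Function.ne_iff.1 hne
  have hi_pos : (0 : ℝ) < x i := Nat.cast_pos.2 (Nat.pos_of_ne_zero hi)
  exact (summable_digit_div_pow hβ hx).tsum_pos (fun j ↦ by positivity) i (by positivity)

lemma expansionValue_mono (hβ : 1 < β) (hy : BddAbove (range y)) (hxy : x ≤ y) :
    expansionValue β x ≤ expansionValue β y := by
  have hx : BddAbove (range x) := hy.range_mono y hxy
  refine (summable_digit_div_pow hβ hx).tsum_le_tsum (fun i ↦ ?_) (summable_digit_div_pow hβ hy)
  gcongr
  exact hxy i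

lemma expansionValue_eq_sum_add (hβ : 1 < β) (hx : BddAbove (range x)) (n : ℕ) :
    expansionValue β x =
      ∑ i ∈ Finset.range n, (x i : ℝ) / β ^ (i + 1) + expansionValue β (shiftN n x) / β ^ n := by
  rw [expansionValue, ← (summable_digit_div_pow hβ hx).sum_add_tsum_nat_add n, expansionValue,
    ← tsum_div_const]
  congr! 3 with i
  rw [shiftN, div_div, ← pow_add, add_right_comm]

lemma mul_expansionValue_shiftN (hβ : 1 < β) (hx : BddAbove (range x)) (n : ℕ) :
    β * expansionValue β (shiftN n x) = x n + expansionValue β (shiftN (n + 1) x) := by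
  have hsplit := expansionValue_eq_sum_add hβ (bddAbove_range_shiftN hx n) 1
  rw [hsplit, Finset.sum_range_one, shiftN_shiftN, add_comm 1 n, zero_add, pow_one, shiftN,
    zero_add]
  field_simp

lemma expansionValue_le_add_of_apply_lt (hβ : 1 < β) (hx : BddAbove (range x))
    (hy : BddAbove (range y)) {n : ℕ} (heq : ∀ i < n, x i = y i) (hlt : x n < y n) :
    expansionValue β x ≤
      expansionValue β y + (expansionValue β (shiftN (n + 1) x) - 1) / β ^ (n + 1) := by
  have hprefix : ∑ i ∈ Finset.range n, (x i : ℝ) / β ^ (i + 1) =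
      ∑ i ∈ Finset.range n, (y i : ℝ) / β ^ (i + 1) :=
    Finset.sum_congr rfl fun i hi ↦ by rw [heq i (Finset.mem_range.1 hi)]
  have hdigit : ((x n : ℝ) + 1) / β ^ (n + 1) ≤ y n / β ^ (n + 1) := by
    gcongr
    exact_mod_cast hlt
  have htail : 0 ≤ expansionValue β (shiftN (n + 1) y) / β ^ (n + 1) :=
    div_nonneg (expansionValue_nonneg (by linarith) _) (by positivity)
  rw [expansionValue_eq_sum_add hβ hx (n + 1), expansionValue_eq_sum_add hβ hy (n + 1),
    Finset.sum_range_succ, Finset.sum_range_succ, hprefix, sub_div]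
  rw [add_div] at hdigit
  linarith

lemma seqLt.expansionValue_le (h : seqLt x y) (hβ : 1 < β) (hx : BddAbove (range x))
    (hy : BddAbove (range y)) (hx_one : ∀ n, expansionValue β (shiftN n x) ≤ 1) :
    expansionValue β x ≤ expansionValue β y := by
  obtain ⟨n, heq, hlt⟩ := h
  refine (expansionValue_le_add_of_apply_lt hβ hx hy heq hlt).trans (add_le_of_nonpos_right ?_)
  exact div_nonpos_of_nonpos_of_nonneg (sub_nonpos.2 (hx_one _)) (by positivity)

lemma bddAbove_range_expansionValue_shiftN (hβ : 1 < β) (hx : BddAbove (range x)) :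
    BddAbove (range fun n ↦ expansionValue β (shiftN n x)) := by
  obtain ⟨M, hM⟩ := hx
  exact ⟨expansionValue β fun _ ↦ M, forall_mem_range.2 fun n ↦
    expansionValue_mono hβ (by simp) fun i ↦ hM (mem_range_self (i + n))⟩

lemma expansionValue_shiftN_le_one (hβ : 1 < β) (hx : BddAbove (range x)) {d : ℕ → ℕ}
    (hd : BddAbove (range d)) (hd_one : expansionValue β d ≤ 1)
    (h : ∀ n, seqLt (shiftN n x) d) (n : ℕ) : expansionValue β (shiftN n x) ≤ 1 := by
  have hbdd := bddAbove_range_expansionValue_shiftN hβ hx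
  set S : ℝ := ⨆ n, expansionValue β (shiftN n x)
  have hle_S (n : ℕ) : expansionValue β (shiftN n x) ≤ S := le_ciSup hbdd n
  refine (hle_S n).trans ?_
  -- The supremum `S` of the values satisfies `S - 1 ≤ (S - 1) / β` as soon as `S > 1`.
  by_contra! hS
  have hcontract (n : ℕ) : expansionValue β (shiftN n x) ≤ 1 + (S - 1) / β := by
    obtain ⟨k, heq, hlt⟩ := h n
    calc expansionValue β (shiftN n x)
        ≤ expansionValue β d + (expansionValue β (shiftN (k + 1) (shiftN n x)) - 1) / β ^ (k + 1) :=
          expansionValue_le_add_of_apply_lt hβ (bddAbove_range_shiftN hx n) hd heq hlt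
      _ ≤ 1 + (S - 1) / β ^ (k + 1) := by
          rw [shiftN_shiftN]
          gcongr
          exact hle_S _
      _ ≤ 1 + (S - 1) / β := by
          gcongr
          exact le_self_pow₀ hβ.le k.succ_ne_zero
  have hS_le : S ≤ 1 + (S - 1) / β := ciSup_le hcontract
  have hlt : (S - 1) / β < S - 1 := div_lt_self (sub_pos.2 hS) hβ
  linarith

end ExpansionValue

section QuasiGreedy

/-- The remainders `r_0 = 1`, `r_{n+1} = β r_n - (⌈β r_n⌉ - 1)` of the quasi-greedy algorithm
expanding `1` in base `β`. -/
noncomputable def quasiGreedyRem (β : ℝ) : ℕ → ℝ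
  | 0 => 1
  | n + 1 => β * quasiGreedyRem β n - (⌈β * quasiGreedyRem β n⌉₊ - 1 : ℕ)

/-- The digits `⌈β r_n⌉ - 1` of the quasi-greedy algorithm. The subtraction is never truncated when
`0 < β`, as the remainders `r_n` are then positive. -/
noncomputable def quasiGreedyDigit (β : ℝ) (n : ℕ) : ℕ :=
  ⌈β * quasiGreedyRem β n⌉₊ - 1

variable {β : ℝ}

lemma quasiGreedyRem_succ (β : ℝ) (n : ℕ) :
    quasiGreedyRem β (n + 1) = β * quasiGreedyRem β n - quasiGreedyDigit β n := rfl

lemma quasiGreedyRem_mem_Ioc (hβ : 0 < β) (n : ℕ) : quasiGreedyRem β n ∈ Ioc (0 : ℝ) 1 := by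
  induction n with
  | zero => simp [quasiGreedyRem]
  | succ n ih =>
    have hceil : 0 < ⌈β * quasiGreedyRem β n⌉₊ := Nat.ceil_pos.2 (mul_pos hβ ih.1)
    have hdigit : quasiGreedyDigit β n + 1 = ⌈β * quasiGreedyRem β n⌉₊ := Nat.sub_add_cancel hceil
    have hupper : β * quasiGreedyRem β n ≤ quasiGreedyDigit β n + 1 := by
      exact_mod_cast Nat.ceil_le.1 hdigit.ge
    have hlower : (quasiGreedyDigit β n : ℝ) < β * quasiGreedyRem β n :=
      Nat.lt_ceil.1 (hdigit ▸ Nat.lt_succ_self _)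
    exact ⟨sub_pos.2 hlower, sub_le_iff_le_add'.2 hupper⟩

lemma quasiGreedyDigit_lt (hβ : 0 < β) (n : ℕ) : (quasiGreedyDigit β n : ℝ) < β := by
  calc (quasiGreedyDigit β n : ℝ)
      < β * quasiGreedyRem β n := sub_pos.1 (quasiGreedyRem_mem_Ioc hβ (n + 1)).1
    _ ≤ β := mul_le_of_le_one_right hβ.le (quasiGreedyRem_mem_Ioc hβ n).2

lemma bddAbove_range_quasiGreedyDigit (hβ : 0 < β) : BddAbove (range (quasiGreedyDigit β)) :=
  ⟨⌊β⌋₊, forall_mem_range.2 fun n ↦ Nat.le_floor (quasiGreedyDigit_lt hβ n).le⟩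

lemma sum_quasiGreedyDigit_div_pow (hβ : β ≠ 0) (n : ℕ) :
    ∑ i ∈ Finset.range n, (quasiGreedyDigit β i : ℝ) / β ^ (i + 1) =
      1 - quasiGreedyRem β n / β ^ n := by
  induction n with
  | zero => simp [quasiGreedyRem]
  | succ n ih =>
    rw [Finset.sum_range_succ, ih, quasiGreedyRem_succ]
    field_simp
    ring

lemma expansionValue_quasiGreedyDigit (hβ : 1 < β) : expansionValue β (quasiGreedyDigit β) = 1 := by
  have hpos : 0 < β := one_pos.trans hβ
  have hrem : Tendsto (fun n ↦ quasiGreedyRem β n / β ^ n) atTop (nhds 0) := by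
    refine squeeze_zero (g := fun n ↦ β⁻¹ ^ n) (fun n ↦ ?_) (fun n ↦ ?_)
      (tendsto_pow_atTop_nhds_zero_of_lt_one (by positivity) (inv_lt_one_of_one_lt₀ hβ))
    · exact div_nonneg (quasiGreedyRem_mem_Ioc hpos n).1.le (by positivity)
    · rw [inv_pow, ← one_div]
      gcongr
      exact (quasiGreedyRem_mem_Ioc hpos n).2
  have hpartial := (summable_digit_div_pow hβ
    (bddAbove_range_quasiGreedyDigit hpos)).hasSum.tendsto_sum_nat
  simp only [sum_quasiGreedyDigit_div_pow hpos.ne'] at hpartial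
  exact tendsto_nhds_unique hpartial (by simpa using hrem.const_sub 1)

lemma expansionValue_shiftN_eq_quasiGreedyRem (hβ : 1 < β) {e : ℕ → ℕ} (he : BddAbove (range e))
    (he_one : expansionValue β e = 1) {n : ℕ} (heq : ∀ i < n, e i = quasiGreedyDigit β i) :
    expansionValue β (shiftN n e) = quasiGreedyRem β n := by
  induction n with
  | zero => exact he_one
  | succ n ih =>
    have hstep := mul_expansionValue_shiftN hβ he n
    rw [ih fun i hi ↦ heq i (hi.trans n.lt_succ_self), heq n n.lt_succ_self] at hstep
    rw [quasiGreedyRem_succ, hstep, add_sub_cancel_left]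

lemma shiftN_quasiGreedyDigit_ne_zero (hβ : 1 < β) (n : ℕ) :
    shiftN n (quasiGreedyDigit β) ≠ 0 := by
  have hpos : 0 < β := one_pos.trans hβ
  have hbdd := bddAbove_range_quasiGreedyDigit hpos
  rw [← expansionValue_pos_iff hβ (bddAbove_range_shiftN hbdd n),
    expansionValue_shiftN_eq_quasiGreedyRem hβ hbdd (expansionValue_quasiGreedyDigit hβ)
      fun _ _ ↦ rfl]
  exact (quasiGreedyRem_mem_Ioc hpos n).1

lemma seqLe_quasiGreedyDigit (hβ : 1 < β) {e : ℕ → ℕ} (he : BddAbove (range e))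
    (he_ne : ∀ n, shiftN n e ≠ 0) (he_one : expansionValue β e = 1) :
    seqLe e (quasiGreedyDigit β) := by
  refine or_iff_not_imp_left.2 fun hne ↦ (seqLt_or_seqLt_of_ne hne).resolve_right ?_
  rintro ⟨n, heq, hlt⟩
  have hrem := expansionValue_shiftN_eq_quasiGreedyRem hβ he he_one fun i hi ↦ (heq i hi).symm
  have hstep := mul_expansionValue_shiftN hβ he n
  have htail : 0 < expansionValue β (shiftN (n + 1) e) :=
    (expansionValue_pos_iff hβ (bddAbove_range_shiftN he (n + 1))).2 (he_ne (n + 1))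
  have hrem_succ : quasiGreedyRem β (n + 1) ≤ 1 := (quasiGreedyRem_mem_Ioc (one_pos.trans hβ) _).2
  have hdigit : (quasiGreedyDigit β n : ℝ) + 1 ≤ e n := by exact_mod_cast hlt
  rw [quasiGreedyRem_succ] at hrem_succ
  rw [hrem] at hstep
  linarith

lemma isQuasiGreedy_quasiGreedyDigit (hβ : β ∈ Ioc (1 : ℝ) 2) :
    IsQuasiGreedy β (quasiGreedyDigit β) := by
  refine ⟨fun n ↦ ?_, ?_, expansionValue_quasiGreedyDigit hβ.1, fun e he he_ne he_one ↦ ?_⟩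
  · have hlt := (quasiGreedyDigit_lt (one_pos.trans hβ.1) n).trans_le hβ.2
    exact Nat.le_of_lt_succ (by exact_mod_cast hlt)
  · rintro ⟨n, hn⟩
    exact shiftN_quasiGreedyDigit_ne_zero hβ.1 n (shiftN_eq_zero_iff.2 hn)
  · exact seqLe_quasiGreedyDigit hβ.1 ⟨1, forall_mem_range.2 he⟩
      (fun n hn ↦ he_ne ⟨n, shiftN_eq_zero_iff.1 hn⟩) he_one

end QuasiGreedy

section LyndonIntervals

variable {β : ℝ} {s s' : List ℕ}

lemma lyndonLeft_eq_expansionValue (β : ℝ) (s : List ℕ) :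
    lyndonLeft β s = expansionValue β (wordSeq s) := by
  refine (tsum_eq_sum fun i hi ↦ ?_).symm
  have hzero : s.getD i 0 = 0 := List.getD_eq_default _ _ (by simpa using hi)
  rw [hzero, Nat.cast_zero, zero_div]

lemma lyndonRight_eq_expansionValue (hβ : 1 < β) (hs : s ≠ []) :
    lyndonRight β s = expansionValue β (perSeq s) := by
  have hsum : ∑ i ∈ Finset.range s.length, (perSeq s i : ℝ) / β ^ (i + 1) = lyndonLeft β s :=
    Finset.sum_congr rfl fun i hi ↦ by rw [perSeq_apply_of_lt (Finset.mem_range.1 hi), wordSeq]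
  have hsplit := expansionValue_eq_sum_add hβ (bddAbove_range_perSeq s) s.length
  rw [hsum, shiftN_length_perSeq] at hsplit
  have hpow : 1 < β ^ s.length := one_lt_pow₀ hβ (List.length_pos_iff.2 hs).ne'
  have hpow_sub : β ^ s.length - 1 ≠ 0 := (sub_pos.2 hpow).ne'
  rw [lyndonRight]
  field_simp at hsplit ⊢
  linarith

lemma lyndonRight_le_lyndonLeft (hβ : 1 < β) (hs : s ≠ [])
    (hs_one : ∀ n, expansionValue β (shiftN n (perSeq s)) ≤ 1)
    (h : seqLt (perSeq s) (wordSeq s')) : lyndonRight β s ≤ lyndonLeft β s' := by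
  rw [lyndonRight_eq_expansionValue hβ hs, lyndonLeft_eq_expansionValue]
  exact h.expansionValue_le hβ (bddAbove_range_perSeq s) (bddAbove_range_wordSeq s') hs_one

end LyndonIntervals

theorem stmt_4_general {β : ℝ} (hβ : 1 < β) {d : ℕ → ℕ} (hd : BddAbove (range d))
    (hd_one : expansionValue β d ≤ 1) {s s' : List ℕ} (hs : IsLyndonWord s)
    (hs' : IsLyndonWord s') (hsd : ∀ n, seqLt (shiftN n (perSeq s)) d)
    (hsd' : ∀ n, seqLt (shiftN n (perSeq s')) d) (hne : s ≠ s') :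
    Ico (lyndonLeft β s) (lyndonRight β s) ∩ Ico (lyndonLeft β s') (lyndonRight β s') = ∅ := by
  have hle_one {w : List ℕ} (hw : ∀ n, seqLt (shiftN n (perSeq w)) d) :
      ∀ n, expansionValue β (shiftN n (perSeq w)) ≤ 1 :=
    expansionValue_shiftN_le_one hβ (bddAbove_range_perSeq w) hd hd_one hw
  rw [← disjoint_iff_inter_eq_empty, Ico_disjoint_Ico]
  rcases hs.perSeq_seqLt_wordSeq_or hs' hne with h | h
  · exact min_le_of_left_le <| le_max_of_le_right <|
      lyndonRight_le_lyndonLeft hβ hs.1 (hle_one hsd) h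
  · exact min_le_of_right_le <| le_max_of_le_left <|
      lyndonRight_le_lyndonLeft hβ hs'.1 (hle_one hsd') h

/-- For any `β ∈ (1,2]`, β-Lyndon intervals generated by distinct
β-Lyndon words are disjoint. -/
theorem stmt_4 (β : ℝ) (hβ : β ∈ Set.Ioc (1 : ℝ) 2) (s s' : List ℕ)
    (hs : IsBetaLyndon β s) (hs' : IsBetaLyndon β s') (hne : s ≠ s') :
    Set.Ico (lyndonLeft β s) (lyndonRight β s) ∩
      Set.Ico (lyndonLeft β s') (lyndonRight β s') = ∅ := by
  have hd := isQuasiGreedy_quasiGreedyDigit hβ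
  exact stmt_4_general hβ.1 ⟨1, forall_mem_range.2 hd.1⟩ hd.2.2.1.le hs.isLyndonWord
    hs'.isLyndonWord (hs.2.2.2 _ hd) (hs'.2.2.2 _ hd) hne
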